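/- Let d ≥ 1, let γ_d be the standard Gaussian measure on ℝ^d, and let k(x,y) = E_Z[relu(⟨x,Z⟩)·relu(⟨y,Z⟩)] with Z ∼ γ_d. Then there exists a constant λ > 0 such that for every x ∈ ℝ^d, ∫ k(x,y)·|y| dγ_d(y) = λ·|x|. That is, the norm function x ↦ |x| is an eigenfunction of the integral operator f ↦ ∫ k(·,y)f(y)dγ_d(y). -/

import Mathlib

open MeasureTheory Real

/-- The standard Gaussian measure on `ℝ^d`. -/
noncomputable def stdGaussian (d : ℕ) : Measure (Fin d → ℝ) :=
  Measure.pi fun _ => ProbabilityTheory.gaussianReal 0 1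

/-- ReLU activation. -/
def relu (t : ℝ) : ℝ := max t 0

/-- Euclidean inner product on `ℝ^d`. -/
noncomputable def dot {d : ℕ} (x y : Fin d → ℝ) : ℝ := ∑ i, x i * y i

/-- Euclidean norm on `ℝ^d`. -/
noncomputable def vnorm {d : ℕ} (x : Fin d → ℝ) : ℝ := Real.sqrt (∑ i, x i ^ 2)

/-- The neural tangent kernel `k(x,y) = E_Z[relu(⟨x,Z⟩) relu(⟨y,Z⟩)]`. -/
noncomputable def ntk (d : ℕ) (x y : Fin d → ℝ) : ℝ :=
  ∫ z, relu (dot x z) * relu (dot y z) ∂ stdGaussian d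

/-- The `n`-th term of the series part of the NTK expansion. -/
noncomputable def ntkTerm {d : ℕ} (x y : Fin d → ℝ) (n : ℕ) : ℝ :=
  (Nat.choose (2 * n) n : ℝ) * dot x y ^ (2 * n + 2) /
    (2 ^ (2 * n) * (2 * n + 1) * (2 * n + 2) * (vnorm x * vnorm y) ^ (2 * n + 1))

/-! Let `(S f)(x) = E[relu ⟪x, Z⟫ f(Z)]`. By Fubini, integrating against the kernel `k` is applying
`S` twice. Since the law of `Z` is invariant under isometries and `relu` is positively homogeneous,
`S ‖·‖` is radial and positively homogeneous of degree one, so it equals `c ‖·‖` for some `c`.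
Hence `‖·‖` is an eigenfunction of `S ∘ S` with eigenvalue `c ^ 2`. If `c` were zero, then
`relu ⟪x, Z⟫` and `relu ⟪-x, Z⟫` would vanish almost surely for every `x`, forcing `Z = 0`. -/

open scoped RealInnerProductSpace

lemma relu_nonneg (t : ℝ) : 0 ≤ relu t := le_max_right t 0

lemma relu_le_abs (t : ℝ) : relu t ≤ |t| := max_le (le_abs_self t) (abs_nonneg t)

lemma relu_eq_zero_iff {t : ℝ} : relu t = 0 ↔ t ≤ 0 := max_eq_right_iff

lemma relu_mul_of_nonneg {c : ℝ} (hc : 0 ≤ c) (t : ℝ) : relu (c * t) = c * relu t := by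
  rw [relu, relu, mul_max_of_nonneg _ _ hc, mul_zero]

@[fun_prop]
lemma continuous_relu : Continuous relu := continuous_id.max continuous_const

section InnerProductSpace

variable {E : Type*} [NormedAddCommGroup E] [InnerProductSpace ℝ E]

lemma norm_relu_inner_le (x y : E) : ‖relu ⟪x, y⟫‖ ≤ ‖x‖ * ‖y‖ := by
  rw [Real.norm_of_nonneg (relu_nonneg _)]
  exact (relu_le_abs _).trans (abs_real_inner_le_norm x y)

lemma eq_mul_norm_of_isometry_invariant_of_homogeneous {f : E → ℝ}
    (hf_inv : ∀ (R : E ≃ₗᵢ[ℝ] E) x, f (R x) = f x)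
    (hf_smul : ∀ c, 0 ≤ c → ∀ x, f (c • x) = c * f x) {e : E} (he : ‖e‖ = 1) (x : E) :
    f x = f e * ‖x‖ := by
  have h_norm : ‖‖x‖ • e‖ = ‖x‖ := by simp [norm_smul, he]
  calc f x = f (‖x‖ • e) := by rw [← hf_inv _ (‖x‖ • e), Submodule.reflection_sub h_norm]
    _ = f e * ‖x‖ := by rw [hf_smul _ (norm_nonneg x), mul_comm]

variable [MeasurableSpace E] {μ : Measure E}

/-- The neural tangent kernel `E[relu ⟪x, Z⟫ * relu ⟪y, Z⟫]` of a random weight `Z` with law `μ`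
in an arbitrary inner product space. -/
noncomputable def reluKernel (μ : Measure E) (x y : E) : ℝ := ∫ z, relu ⟪x, z⟫ * relu ⟪y, z⟫ ∂μ

/-- The integral transform with kernel `relu ⟪x, z⟫`; its square is the integral operator with
kernel `reluKernel μ`. -/
noncomputable def reluTransform (μ : Measure E) (f : E → ℝ) (x : E) : ℝ :=
  ∫ z, relu ⟪x, z⟫ * f z ∂μ

lemma reluTransform_const_mul (c : ℝ) (f : E → ℝ) (x : E) :
    reluTransform μ (fun z ↦ c * f z) x = c * reluTransform μ f x := by
  simp only [reluTransform, mul_left_comm _ c, integral_const_mul]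

lemma reluTransform_smul_of_nonneg (f : E → ℝ) {c : ℝ} (hc : 0 ≤ c) (x : E) :
    reluTransform μ f (c • x) = c * reluTransform μ f x := by
  simp only [reluTransform, real_inner_smul_left, relu_mul_of_nonneg hc, mul_assoc,
    integral_const_mul]

variable [BorelSpace E]

lemma reluTransform_isometry {f : E → ℝ} {R : E ≃ₗᵢ[ℝ] E} (hR : MeasurePreserving R μ μ)
    (hf : ∀ z, f (R z) = f z) (x : E) : reluTransform μ f (R x) = reluTransform μ f x := by
  unfold reluTransform
  rw [← hR.integral_comp R.toHomeomorph.measurableEmbedding]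
  simp only [R.inner_map_map, hf]

lemma exists_reluTransform_norm_eq [Nontrivial E]
    (hμ_inv : ∀ R : E ≃ₗᵢ[ℝ] E, MeasurePreserving R μ μ) :
    ∃ c, ∀ x, reluTransform μ norm x = c * ‖x‖ := by
  obtain ⟨e, he⟩ := exists_norm_eq E zero_le_one
  exact ⟨reluTransform μ norm e, eq_mul_norm_of_isometry_invariant_of_homogeneous
    (fun R ↦ reluTransform_isometry (hμ_inv R) R.norm_map)
    (fun _ ↦ reluTransform_smul_of_nonneg norm) he⟩

lemma integrable_relu_inner_mul {f : E → ℝ} (hμ : MemLp id 2 μ) (hf : MemLp f 2 μ) (x : E) :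
    Integrable (fun z ↦ relu ⟪x, z⟫ * f z) μ := by
  have h_relu : MemLp (fun z ↦ relu ⟪x, z⟫) 2 μ :=
    hμ.of_le_mul (Continuous.aestronglyMeasurable (by fun_prop))
      (ae_of_all _ fun z ↦ norm_relu_inner_le x z)
  exact h_relu.integrable_mul hf

variable [SecondCountableTopology E]

lemma ae_eq_zero_of_reluTransform_norm_eq_zero (hμ : MemLp id 2 μ)
    (h : ∀ x, reluTransform μ norm x = 0) : ∀ᵐ z ∂μ, z = 0 := by
  have h_inner_nonpos (x : E) : ∀ᵐ z ∂μ, ⟪x, z⟫ ≤ 0 := by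
    have h_integrand := (integral_eq_zero_iff_of_nonneg
      (fun z ↦ mul_nonneg (relu_nonneg ⟪x, z⟫) (norm_nonneg z))
      (integrable_relu_inner_mul hμ hμ.norm x)).1 (h x)
    filter_upwards [h_integrand] with z hz
    rcases mul_eq_zero.1 hz with h_relu | h_norm
    · exact relu_eq_zero_iff.1 h_relu
    · simp [norm_eq_zero.1 h_norm]
  refine ae_eq_zero_of_forall_inner (𝕜 := ℝ) (f := id) fun x ↦ ?_
  filter_upwards [h_inner_nonpos x, h_inner_nonpos (-x)] with z hz hz_neg
  rw [inner_neg_left, neg_nonpos] at hz_neg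
  exact le_antisymm hz hz_neg

lemma integrable_prod_relu_inner_mul {f : E → ℝ} (hμ : MemLp id 2 μ) (hf : MemLp f 2 μ) (x : E) :
    Integrable (fun p : E × E ↦ relu ⟪x, p.2⟫ * (relu ⟪p.2, p.1⟫ * f p.1)) (μ.prod μ) := by
  have h_bound : Integrable (fun p : E × E ↦ ‖p.1‖ * ‖f p.1‖ * (‖x‖ * ‖p.2‖ ^ 2)) (μ.prod μ) :=
    (hμ.norm.integrable_mul hf.norm).mul_prod (hμ.norm.integrable_sq.const_mul ‖x‖)
  have h_meas : AEStronglyMeasurable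
      (fun p : E × E ↦ relu ⟪x, p.2⟫ * (relu ⟪p.2, p.1⟫ * f p.1)) (μ.prod μ) :=
    (Continuous.aestronglyMeasurable (by fun_prop)).mul
      ((Continuous.aestronglyMeasurable (by fun_prop)).mul hf.1.comp_fst)
  refine h_bound.mono' h_meas (ae_of_all _ fun ⟨y, z⟩ ↦ ?_)
  calc ‖relu ⟪x, z⟫ * (relu ⟪z, y⟫ * f y)‖
      = ‖relu ⟪x, z⟫‖ * (‖relu ⟪z, y⟫‖ * ‖f y‖) := by rw [norm_mul, norm_mul]
    _ ≤ (‖x‖ * ‖z‖) * ((‖z‖ * ‖y‖) * ‖f y‖) := by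
      gcongr <;> exact norm_relu_inner_le _ _
    _ = ‖y‖ * ‖f y‖ * (‖x‖ * ‖z‖ ^ 2) := by ring

variable [SFinite μ]

lemma integral_reluKernel_mul {f : E → ℝ} (hμ : MemLp id 2 μ) (hf : MemLp f 2 μ) (x : E) :
    ∫ y, reluKernel μ x y * f y ∂μ = reluTransform μ (reluTransform μ f) x := by
  calc ∫ y, reluKernel μ x y * f y ∂μ
      = ∫ y, ∫ z, relu ⟪x, z⟫ * (relu ⟪z, y⟫ * f y) ∂μ ∂μ := by
        simp only [reluKernel, ← integral_mul_const, mul_assoc, real_inner_comm]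
    _ = ∫ z, ∫ y, relu ⟪x, z⟫ * (relu ⟪z, y⟫ * f y) ∂μ ∂μ :=
        integral_integral_swap (integrable_prod_relu_inner_mul hμ hf x)
    _ = reluTransform μ (reluTransform μ f) x := by
        simp only [reluTransform, integral_const_mul]

theorem norm_eigenfunction_general (hμ : MemLp id 2 μ)
    (hμ_inv : ∀ R : E ≃ₗᵢ[ℝ] E, MeasurePreserving R μ μ) (hμ_ne : ∃ᵐ z ∂μ, z ≠ 0) :
    ∃ lam : ℝ, 0 < lam ∧ ∀ x, ∫ y, reluKernel μ x y * ‖y‖ ∂μ = lam * ‖x‖ := by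
  obtain ⟨z, hz⟩ := hμ_ne.exists
  have : Nontrivial E := nontrivial_of_ne z 0 hz
  obtain ⟨c, hc⟩ := exists_reluTransform_norm_eq hμ_inv
  have hc_ne : c ≠ 0 := by
    rintro rfl
    exact hμ_ne ((ae_eq_zero_of_reluTransform_norm_eq_zero hμ (by simpa using hc)).mono
      fun _ ↦ not_not_intro)
  refine ⟨c ^ 2, by positivity, fun x ↦ ?_⟩
  calc ∫ y, reluKernel μ x y * ‖y‖ ∂μ
      = reluTransform μ (reluTransform μ norm) x := integral_reluKernel_mul hμ hμ.norm x
    _ = reluTransform μ (fun z ↦ c * ‖z‖) x := by rw [funext hc]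
    _ = c ^ 2 * ‖x‖ := by rw [reluTransform_const_mul, hc, sq, mul_assoc]

end InnerProductSpace

section Gaussian

section InnerProductSpace

variable (E : Type*) [NormedAddCommGroup E] [InnerProductSpace ℝ E] [FiniteDimensional ℝ E]
  [MeasurableSpace E] [BorelSpace E] [Nontrivial E]

lemma frequently_ne_zero_stdGaussian : ∃ᵐ z ∂ProbabilityTheory.stdGaussian E, z ≠ 0 := by
  intro h_zero
  obtain ⟨x, hx⟩ := exists_ne (0 : E)
  have h_congr : innerSL ℝ x =ᵐ[ProbabilityTheory.stdGaussian E] 0 := by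
    filter_upwards [h_zero] with z hz
    simp [not_not.1 hz]
  have h_var := ProbabilityTheory.variance_dual_stdGaussian (innerSL ℝ x)
  rw [ProbabilityTheory.variance_congr h_congr, ProbabilityTheory.variance_zero,
    innerSL_apply_norm] at h_var
  exact hx (by simpa using h_var.symm)

lemma exists_integral_reluKernel_stdGaussian_mul_norm_eq :
    ∃ lam : ℝ, 0 < lam ∧ ∀ x, ∫ y, reluKernel (ProbabilityTheory.stdGaussian E) x y * ‖y‖
      ∂ProbabilityTheory.stdGaussian E = lam * ‖x‖ :=
  norm_eigenfunction_general (ProbabilityTheory.IsGaussian.memLp_id _ 2 (by simp))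
    (fun R ↦ ⟨R.continuous.measurable, ProbabilityTheory.stdGaussian_map R⟩)
    (frequently_ne_zero_stdGaussian E)

end InnerProductSpace

variable {d : ℕ}

lemma dot_eq_inner_toLp (x y : Fin d → ℝ) : dot x y = ⟪WithLp.toLp 2 x, WithLp.toLp 2 y⟫ := by
  simp [dot, PiLp.inner_apply, mul_comm]

lemma vnorm_eq_norm_toLp (x : Fin d → ℝ) : vnorm x = ‖WithLp.toLp 2 x‖ := by
  simp [vnorm, EuclideanSpace.norm_eq]

lemma integral_stdGaussian_comp_toLp (f : EuclideanSpace ℝ (Fin d) → ℝ) :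
    ∫ y, f (WithLp.toLp 2 y) ∂stdGaussian d =
      ∫ y, f y ∂ProbabilityTheory.stdGaussian (EuclideanSpace ℝ (Fin d)) := by
  rw [← ProbabilityTheory.map_pi_eq_stdGaussian]
  exact ((MeasurableEquiv.toLp 2 (Fin d → ℝ)).measurableEmbedding.integral_map f).symm

lemma integral_ntk_mul_vnorm (x : Fin d → ℝ) :
    ∫ y, ntk d x y * vnorm y ∂stdGaussian d =
      ∫ y, reluKernel (ProbabilityTheory.stdGaussian (EuclideanSpace ℝ (Fin d)))
        (WithLp.toLp 2 x) y * ‖y‖ ∂ProbabilityTheory.stdGaussian (EuclideanSpace ℝ (Fin d)) := by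
  simp only [← integral_stdGaussian_comp_toLp, reluKernel, ntk, dot_eq_inner_toLp,
    vnorm_eq_norm_toLp]

end Gaussian

theorem norm_eigenfunction (d : ℕ) (hd : 1 ≤ d) :
    ∃ lam : ℝ, 0 < lam ∧
      ∀ x : Fin d → ℝ, ∫ y, ntk d x y * vnorm y ∂ stdGaussian d = lam * vnorm x := by
  have : NeZero d := ⟨by lia⟩
  obtain ⟨lam, hlam_pos, hlam⟩ :=
    exists_integral_reluKernel_stdGaussian_mul_norm_eq (EuclideanSpace ℝ (Fin d))
  exact ⟨lam, hlam_pos, fun x ↦ by rw [integral_ntk_mul_vnorm, vnorm_eq_norm_toLp, hlam]⟩
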